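/- Let D₂ denote the diamond poset, the poset on four elements a, b, c, d with a < b, a < c, b < d, c < d, where b and c are incomparable. For every n, La#(n, D₂) ≤ 16 · C(n, ⌊n/2⌋); that is, every family of subsets of [n] containing no induced copy of D₂ has size at most 16 · C(n, ⌊n/2⌋). -/

import Mathlib

/-!
A full chain of subsets of a finite set `V` is encoded as a `Numbering V`; the members of the chain
are the prefixes of the numbering. The proof is an averaging argument over all full chains: in an
induced-diamond-free family `F`, a uniformly random full chain meets `F` in at most `4` sets on
average (`sum_card_prefixed_le`), and, as in the proof of the LYM inequality, this gives
`F.card ≤ 4 * n.choose (n / 2)`.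

To bound the average, sort the full chains meeting `F` by their smallest member `A` and largest
member `D` in `F` (`chainsBetween F A D`). Besides `A` and `D`, such a chain meets `F` only in sets
`B` with `A ⊂ B ⊂ D`. Since `F` has no induced diamond, these `B` form a chain, so there are at most
`#D - #A` of them. A fixed `B` lies on at most a fraction `2 / (#D - #A)` of the chains in the class
(`card_mul_card_filter_le`): transposing a point of `B \ A` with a point of `D \ B` keeps a full
chain in the class, and a fixed point on one side together with a varying point on the other yields
pairwise distinct images of `B`. So each class contributes on average at most `2 + 2` sets.
-/

/-- The family `F` of subsets of `[n]` contains the poset `P` as an induced subposet. -/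
def ContainsInduced (P : Type*) [PartialOrder P] {n : ℕ}
    (F : Finset (Finset (Fin n))) : Prop :=
  ∃ α : P → Finset (Fin n), Function.Injective α ∧ (∀ p, α p ∈ F) ∧
    ∀ x y : P, x < y ↔ α x ⊂ α y

open Finset Numbering

section Chains

set_option linter.unusedSectionVars false

variable {V : Type*} [Fintype V] [DecidableEq V]

lemma isPrefix_trans_iff (f : Numbering V) (π : Equiv.Perm V) (C : Finset V) :
    IsPrefix (π.trans f : Numbering V) C ↔ IsPrefix f (C.map π.toEmbedding) := by
  constructor
  · intro h z
    have := h (π.symm z)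
    simpa [Finset.mem_map_equiv] using this
  · intro h x
    have := h (π x)
    simpa [Finset.mem_map_equiv] using this

lemma map_swap_eq {x y : V} {C : Finset V} (h : x ∈ C ↔ y ∈ C) :
    C.map (Equiv.swap x y).toEmbedding = C := by
  ext z
  rw [Finset.mem_map_equiv, Equiv.symm_swap, Equiv.swap_apply_def]
  split_ifs with h1 h2
  · subst h1; exact h.symm
  · subst h2; exact h
  · rfl

lemma IsPrefix.eq_of_card_eq {f : Numbering V} {s t : Finset V} (hs : IsPrefix f s)
    (ht : IsPrefix f t) (h : #s = #t) : s = t :=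
  (hs.subset_of_card_le_card ht h.le).antisymm (ht.subset_of_card_le_card hs h.ge)

lemma IsPrefix.subset_or_subset {f : Numbering V} {s t : Finset V} (hs : IsPrefix f s)
    (ht : IsPrefix f t) : s ⊆ t ∨ t ⊆ s :=
  (Nat.le_total #s #t).imp (hs.subset_of_card_le_card ht) (ht.subset_of_card_le_card hs)

/-- The full chains (as numberings) that pass through `A` and `D` and all of whose members in `F`
lie between `A` and `D`. For `A, D ∈ F` this says that `A` and `D` are the smallest and the largest
member of `F` on the chain. -/
def chainsBetween (F : Finset (Finset V)) (A D : Finset V) : Finset (Numbering V) :=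
  {f | IsPrefix f A ∧ IsPrefix f D ∧ ∀ C ∈ F, IsPrefix f C → A ⊆ C ∧ C ⊆ D}

lemma mem_chainsBetween {F : Finset (Finset V)} {A D : Finset V} {f : Numbering V} :
    f ∈ chainsBetween F A D ↔
      IsPrefix f A ∧ IsPrefix f D ∧ ∀ C ∈ F, IsPrefix f C → A ⊆ C ∧ C ⊆ D := by
  simp [chainsBetween]

lemma swap_trans_mem_chainsBetween {F : Finset (Finset V)} {A D : Finset V} {f : Numbering V}
    (hf : f ∈ chainsBetween F A D) {x y : V} (hx : x ∈ D \ A) (hy : y ∈ D \ A) :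
    ((Equiv.swap x y).trans f : Numbering V) ∈ chainsBetween F A D := by
  rw [mem_chainsBetween] at hf ⊢
  obtain ⟨hA, hD, hC⟩ := hf
  rw [mem_sdiff] at hx hy
  have hA' : IsPrefix ((Equiv.swap x y).trans f : Numbering V) A := by
    rw [isPrefix_trans_iff, map_swap_eq (by tauto)]; exact hA
  have hD' : IsPrefix ((Equiv.swap x y).trans f : Numbering V) D := by
    rw [isPrefix_trans_iff, map_swap_eq (by tauto)]; exact hD
  refine ⟨hA', hD', fun C hCF hCp => ⟨?_, ?_⟩⟩
  · rcases IsPrefix.subset_or_subset hA' hCp with h | h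
    · exact h
    · rw [isPrefix_trans_iff,
        map_swap_eq (iff_of_false (fun t => hx.2 (h t)) (fun t => hy.2 (h t)))] at hCp
      exact (hC C hCF hCp).1
  · rcases IsPrefix.subset_or_subset hCp hD' with h | h
    · exact h
    · rw [isPrefix_trans_iff, map_swap_eq (iff_of_true (h hx.1) (h hy.1))] at hCp
      exact (hC C hCF hCp).2

/-- If the transpositions `swap (p t) (q t)`, `t ∈ T`, of points of `D \ A` move `B` to pairwise
distinct sets, then at most a fraction `1 / #T` of the chains in `chainsBetween F A D` pass
through `B`. -/
lemma card_mul_card_filter_le_of_injOn {F : Finset (Finset V)} {A B D : Finset V}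
    (T : Finset V) (p q : V → V) (hp : ∀ t ∈ T, p t ∈ D \ A) (hq : ∀ t ∈ T, q t ∈ D \ A)
    (hinj : Set.InjOn (fun t => B.map (Equiv.swap (p t) (q t)).toEmbedding) T) :
    #T * #{f ∈ chainsBetween F A D | IsPrefix f B} ≤ #(chainsBetween F A D) := by
  rw [← card_product]
  refine card_le_card_of_injOn
    (fun z => ((Equiv.swap (p z.1) (q z.1)).trans z.2 : Numbering V)) ?_ ?_
  · rintro ⟨t, f⟩ h
    simp only [coe_product, Set.mem_prod, mem_coe, mem_filter] at h
    exact swap_trans_mem_chainsBetween h.2.1 (hp t h.1) (hq t h.1)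
  · have key : ∀ t (f : Numbering V), IsPrefix f B →
        IsPrefix ((Equiv.swap (p t) (q t)).trans f : Numbering V)
          (B.map (Equiv.swap (p t) (q t)).toEmbedding) := by
      intro t f hf
      rw [isPrefix_trans_iff]
      convert hf
      ext z
      simp [Finset.mem_map_equiv]
    rintro ⟨t, f⟩ h ⟨t', f'⟩ h' heq
    simp only [coe_product, Set.mem_prod, mem_coe, mem_filter] at h h' heq
    have h1 := key t f h.2.2
    have h2 := key t' f' h'.2.2
    rw [heq] at h1
    have ht : t = t' := hinj h.1 h'.1 (IsPrefix.eq_of_card_eq h1 h2 (by simp))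
    subst ht
    refine Prod.ext rfl (Equiv.ext fun z => ?_)
    have := congrArg (fun e : Numbering V => e (Equiv.swap (p t) (q t) z)) heq
    simpa using this

lemma card_mul_card_filter_le {F : Finset (Finset V)} {A B D : Finset V} (hAB : A ⊂ B)
    (hBD : B ⊂ D) :
    (#D - #A) * #{f ∈ chainsBetween F A D | IsPrefix f B} ≤ 2 * #(chainsBetween F A D) := by
  obtain ⟨x₀, hx₀, hx₀'⟩ := exists_of_ssubset hAB
  obtain ⟨y₀, hy₀, hy₀'⟩ := exists_of_ssubset hBD
  have h1 := card_mul_card_filter_le_of_injOn (F := F) (B := B) (B \ A) id (fun _ => y₀)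
    (fun t ht => sdiff_subset_sdiff hBD.subset le_rfl ht)
    (fun t _ => mem_sdiff.2 ⟨hy₀, fun h => hy₀' (hAB.subset h)⟩) (by
      intro x hx x' hx' h
      by_contra hne
      simp only [mem_coe, mem_sdiff] at hx hx'
      have hxy : x ≠ y₀ := fun e => hy₀' (e ▸ hx.1)
      have := congrArg (x ∈ ·) h
      simp [Finset.mem_map_equiv, Equiv.swap_apply_of_ne_of_ne hne hxy, hx.1, hy₀'] at this)
  have h2 := card_mul_card_filter_le_of_injOn (F := F) (B := B) (D \ B) (fun _ => x₀) id
    (fun t _ => mem_sdiff.2 ⟨hBD.subset hx₀, hx₀'⟩)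
    (fun t ht => sdiff_subset_sdiff le_rfl hAB.subset ht) (by
      intro y hy y' hy' h
      by_contra hne
      simp only [mem_coe, mem_sdiff] at hy hy'
      have hxy : y ≠ x₀ := fun e => hy.2 (e ▸ hx₀)
      have := congrArg (y ∈ ·) h
      simp [Finset.mem_map_equiv, Equiv.swap_apply_of_ne_of_ne hxy hne, hy.2, hx₀] at this)
  rw [card_sdiff_of_subset hAB.subset] at h1
  rw [card_sdiff_of_subset hBD.subset] at h2
  have e : #D - #A = (#B - #A) + (#D - #B) := by
    have := card_lt_card hAB
    have := card_lt_card hBD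
    omega
  rw [e, add_mul]
  omega

/-- The total number of incidences between the chains in one class and the members of `F` strictly
between `A` and `D`, provided those members form a chain. -/
lemma sum_card_filter_le {F : Finset (Finset V)} {A D : Finset V}
    (hchain : ∀ B ∈ F, ∀ C ∈ F, A ⊂ B → B ⊂ D → A ⊂ C → C ⊂ D → B ⊆ C ∨ C ⊆ B) :
    ∑ B ∈ F with A ⊂ B ∧ B ⊂ D, #{f ∈ chainsBetween F A D | IsPrefix f B} ≤
      2 * #(chainsBetween F A D) := by
  set S := F.filter (fun B => A ⊂ B ∧ B ⊂ D) with hS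
  rcases S.eq_empty_or_nonempty with h0 | ⟨B₀, hB₀⟩
  · simp [h0]
  have hlt : 0 < #D - #A := by
    have h := (mem_filter.1 hB₀).2
    have := card_lt_card (h.1.trans h.2)
    omega
  -- The members of `S` have distinct cardinalities, strictly between `#A` and `#D`.
  have hcard : #S ≤ #D - #A := by
    calc #S ≤ #(Ico #A #D) := by
          refine card_le_card_of_injOn card ?_ ?_
          · intro B hB
            have h := (mem_filter.1 (mem_coe.1 hB)).2
            simpa using ⟨(card_lt_card h.1).le, card_lt_card h.2⟩
          · intro B hB C hC h
            have hB := mem_filter.1 (mem_coe.1 hB)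
            have hC := mem_filter.1 (mem_coe.1 hC)
            rcases hchain B hB.1 C hC.1 hB.2.1 hB.2.2 hC.2.1 hC.2.2 with h' | h'
            · exact eq_of_subset_of_card_le h' h.ge
            · exact (eq_of_subset_of_card_le h' h.le).symm
      _ = #D - #A := Nat.card_Ico _ _
  refine Nat.le_of_mul_le_mul_left ?_ hlt
  rw [mul_sum]
  calc ∑ B ∈ S, (#D - #A) * #{f ∈ chainsBetween F A D | IsPrefix f B}
      ≤ ∑ B ∈ S, 2 * #(chainsBetween F A D) :=
        sum_le_sum fun B hB => card_mul_card_filter_le (mem_filter.1 hB).2.1 (mem_filter.1 hB).2.2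
    _ = #S * (2 * #(chainsBetween F A D)) := by rw [sum_const, smul_eq_mul]
    _ ≤ _ := Nat.mul_le_mul_right _ hcard

lemma exists_mem_chainsBetween {F : Finset (Finset V)} {f : Numbering V}
    (h : {B ∈ F | IsPrefix f B}.Nonempty) :
    ∃ A ∈ F, ∃ D ∈ F, f ∈ chainsBetween F A D := by
  obtain ⟨A, hA, hA'⟩ := exists_min_image _ card h
  obtain ⟨D, hD, hD'⟩ := exists_max_image _ card h
  rw [mem_filter] at hA hD
  refine ⟨A, hA.1, D, hD.1, mem_chainsBetween.2 ⟨hA.2, hD.2, fun C hC hCp => ?_⟩⟩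
  have hm := mem_filter.2 ⟨hC, hCp⟩
  exact ⟨hA.2.subset_of_card_le_card hCp (hA' C hm), hCp.subset_of_card_le_card hD.2 (hD' C hm)⟩

lemma card_filter_isPrefix_le {F : Finset (Finset V)} {A D : Finset V} {f : Numbering V}
    (h : f ∈ chainsBetween F A D) :
    #{B ∈ F | IsPrefix f B} ≤ 2 + #{B ∈ F | (A ⊂ B ∧ B ⊂ D) ∧ IsPrefix f B} := by
  have hsub : {B ∈ F | IsPrefix f B} ⊆
      {A, D} ∪ {B ∈ F | (A ⊂ B ∧ B ⊂ D) ∧ IsPrefix f B} := by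
    intro B hB
    rw [mem_filter] at hB
    have hb := (mem_chainsBetween.1 h).2.2 B hB.1 hB.2
    by_cases h1 : B = A
    · simp [h1]
    by_cases h2 : B = D
    · simp [h2]
    refine mem_union_right _ (mem_filter.2 ⟨hB.1, ⟨?_, ?_⟩, hB.2⟩)
    · exact hb.1.ssubset_of_ne (Ne.symm h1)
    · exact hb.2.ssubset_of_ne h2
  exact (card_le_card hsub).trans ((card_union_le _ _).trans (Nat.add_le_add_right card_le_two _))

/-- The average number of members of `F` on a full chain is at most `4`. -/
lemma sum_card_prefixed_le {F : Finset (Finset V)}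
    (hchain : ∀ A ∈ F, ∀ D ∈ F, ∀ B ∈ F, ∀ C ∈ F,
      A ⊂ B → B ⊂ D → A ⊂ C → C ⊂ D → B ⊆ C ∨ C ⊆ B) :
    ∑ B ∈ F, #(prefixed B) ≤ 4 * (Fintype.card V).factorial := by
  have hdisj : ((F ×ˢ F : Finset _) : Set (Finset V × Finset V)).PairwiseDisjoint
      (fun z => chainsBetween F z.1 z.2) := by
    rintro ⟨A, D⟩ h ⟨A', D'⟩ h' hne
    simp only [coe_product, Set.mem_prod, mem_coe] at h h'
    refine disjoint_left.2 fun f hf hf' => hne ?_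
    obtain ⟨hA, hD, hC⟩ := mem_chainsBetween.1 hf
    obtain ⟨hA', hD', hC'⟩ := mem_chainsBetween.1 hf'
    exact Prod.ext ((hC A' h'.1 hA').1.antisymm (hC' A h.1 hA).1)
      ((hC' D h.2 hD).2.antisymm (hC D' h'.2 hD').2)
  calc ∑ B ∈ F, #(prefixed B)
      = ∑ f : Numbering V, #{B ∈ F | IsPrefix f B} := by
        simp only [prefixed, card_filter]
        exact sum_comm
    _ ≤ ∑ f : Numbering V, ∑ z ∈ F ×ˢ F, if f ∈ chainsBetween F z.1 z.2 then
          2 + #{B ∈ F | (z.1 ⊂ B ∧ B ⊂ z.2) ∧ IsPrefix f B} else 0 := by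
        refine sum_le_sum fun f _ => ?_
        rcases ({B ∈ F | IsPrefix f B} : Finset _).eq_empty_or_nonempty with h0 | h0
        · simp [h0]
        obtain ⟨A, hA, D, hD, hf⟩ := exists_mem_chainsBetween h0
        refine (card_filter_isPrefix_le hf).trans ?_
        refine le_trans ?_ (single_le_sum (fun _ _ => Nat.zero_le _)
          (mem_product.2 ⟨hA, hD⟩ : (A, D) ∈ F ×ˢ F))
        simp [hf]
    _ = ∑ z ∈ F ×ˢ F, ∑ f ∈ chainsBetween F z.1 z.2,
          (2 + #{B ∈ F | (z.1 ⊂ B ∧ B ⊂ z.2) ∧ IsPrefix f B}) := by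
        rw [sum_comm]
        refine sum_congr rfl fun z _ => ?_
        rw [← sum_filter, filter_mem_eq_inter, univ_inter]
    _ ≤ ∑ z ∈ F ×ˢ F, 4 * #(chainsBetween F z.1 z.2) := by
        refine sum_le_sum fun z hz => ?_
        rw [mem_product] at hz
        have h := sum_card_filter_le (hchain z.1 hz.1 z.2 hz.2)
        have e : ∑ f ∈ chainsBetween F z.1 z.2,
            #{B ∈ F | (z.1 ⊂ B ∧ B ⊂ z.2) ∧ IsPrefix f B} =
            ∑ B ∈ F with z.1 ⊂ B ∧ B ⊂ z.2, #{f ∈ chainsBetween F z.1 z.2 | IsPrefix f B} := by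
          simp only [← filter_filter, card_filter _ (chainsBetween F z.1 z.2)]
          simp only [card_filter (fun B => IsPrefix _ B)]
          exact sum_comm
        rw [sum_add_distrib, sum_const, smul_eq_mul, e]
        omega
    _ = 4 * #((F ×ˢ F).biUnion fun z => chainsBetween F z.1 z.2) := by
        rw [← mul_sum, card_biUnion hdisj]
    _ ≤ 4 * (Fintype.card V).factorial := by
        refine Nat.mul_le_mul_left _ ((card_le_univ _).trans_eq ?_)
        exact Fintype.card_numbering

lemma card_le_of_sum_card_prefixed_le {F : Finset (Finset V)} {k : ℕ}
    (h : ∑ B ∈ F, #(prefixed B) ≤ k * (Fintype.card V).factorial) :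
    #F ≤ k * (Fintype.card V).choose (Fintype.card V / 2) := by
  set N := Fintype.card V
  refine Nat.le_of_mul_le_mul_right ?_ (Nat.factorial_pos N)
  calc #F * N.factorial = ∑ B ∈ F, N.choose #B * #(prefixed B) := by
        rw [← smul_eq_mul, ← sum_const]
        refine sum_congr rfl fun B _ => ?_
        rw [card_prefixed, ← mul_assoc]
        exact (Nat.choose_mul_factorial_mul_factorial (card_le_univ B)).symm
    _ ≤ ∑ B ∈ F, N.choose (N / 2) * #(prefixed B) :=
        sum_le_sum fun B _ => Nat.mul_le_mul_right _ (Nat.choose_le_middle _ _)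
    _ = N.choose (N / 2) * ∑ B ∈ F, #(prefixed B) := by rw [mul_sum]
    _ ≤ N.choose (N / 2) * (k * N.factorial) := Nat.mul_le_mul_left _ h
    _ = _ := by ring

end Chains

/-- Let `D₂` be the diamond poset on four elements `a, b, c, d` with
`a < b, c < d` and `b, c` incomparable. Every family of subsets of `[n]` with no induced
copy of `D₂` has size at most `16·C(n, ⌊n/2⌋)`. -/
theorem stmt_14 (D : Type) [PartialOrder D] (a b c d : D)
    (hab : a ≠ b) (hac : a ≠ c) (had : a ≠ d) (hbc : b ≠ c) (hbd : b ≠ d) (hcd : c ≠ d)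
    (hall : ∀ x : D, x = a ∨ x = b ∨ x = c ∨ x = d)
    (hlt : ∀ x y : D, x < y ↔
      (x = a ∧ y = b) ∨ (x = a ∧ y = c) ∨ (x = a ∧ y = d) ∨
        (x = b ∧ y = d) ∨ (x = c ∧ y = d))
    (n : ℕ) (F : Finset (Finset (Fin n))) (hF : ¬ ContainsInduced D F) :
    F.card ≤ 16 * n.choose (n / 2) := by
  classical
  have hchain : ∀ A ∈ F, ∀ E ∈ F, ∀ B ∈ F, ∀ C ∈ F,
      A ⊂ B → B ⊂ E → A ⊂ C → C ⊂ E → B ⊆ C ∨ C ⊆ B := by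
    intro A hA E hE B hB C hC hAB hBE hAC hCE
    by_contra! hcon
    obtain ⟨h1, h2⟩ := hcon
    -- `A`, `B`, `C`, `E` would form an induced diamond.
    let α : D → Finset (Fin n) := fun x => if x = a then A else if x = b then B else
      if x = c then C else E
    have ea : α a = A := by simp [α]
    have eb : α b = B := by simp [α, hab.symm]
    have ec : α c = C := by simp [α, hac.symm, hbc.symm]
    have ed : α d = E := by simp [α, had.symm, hbd.symm, hcd.symm]
    have hAE := hAB.trans hBE
    have nBC : ¬ B ⊂ C := fun h => h1 h.subset
    have nCB : ¬ C ⊂ B := fun h => h2 h.subset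
    have hrel : ∀ x y : D, x < y ↔ α x ⊂ α y := by
      intro x y
      rw [hlt]
      rcases hall x with rfl | rfl | rfl | rfl <;> rcases hall y with rfl | rfl | rfl | rfl <;>
        simp only [ea, eb, ec, ed, hAB, hBE, hAC, hCE, hAE, nBC, nCB, hAB.asymm, hBE.asymm,
          hAC.asymm, hCE.asymm, hAE.asymm, ssubset_irrefl] <;> simp_all [eq_comm]
    refine hF ⟨α, ?_, ?_, hrel⟩
    · have nBC' : B ≠ C := fun h => h1 h.subset
      intro x y hxy
      rcases hall x with rfl | rfl | rfl | rfl <;> rcases hall y with rfl | rfl | rfl | rfl <;>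
        first
        | rfl
        | (exfalso
           simp only [ea, eb, ec, ed] at hxy
           first
           | exact hAB.ne hxy | exact hAB.ne hxy.symm | exact hBE.ne hxy | exact hBE.ne hxy.symm
           | exact hAC.ne hxy | exact hAC.ne hxy.symm | exact hCE.ne hxy | exact hCE.ne hxy.symm
           | exact hAE.ne hxy | exact hAE.ne hxy.symm | exact nBC' hxy | exact nBC' hxy.symm)
    · intro x
      rcases hall x with rfl | rfl | rfl | rfl
      · rwa [ea]
      · rwa [eb]
      · rwa [ec]
      · rwa [ed]
  have h := card_le_of_sum_card_prefixed_le (sum_card_prefixed_le hchain)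
  rw [Fintype.card_fin] at h
  omega
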